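/- arXiv:1201.3315 — 2 statements merged into one kernel-verified Lean document; each statement's English description precedes it below -/
import Mathlib

section
/- Let π = 2 + i, so that p = π·π̄ = 5, and let n ≥ 1 and 1 ≤ k ≤ n. If C is an additive subgroup of G_{2+i}^n of cardinality 5^k (an (n,k) linear code) that corrects all errors of Mannheim weight 2 or less, then 5^{n−k} ≥ 8n² − 4n + 1. -/
/-- The Mannheim weight of a residue class `x ∈ G_π = ℤ[i]/(π)`: the least value
of `|a| + |b|` over all Gaussian integers `a + bi` in the class `x`. -/
noncomputable def mWt (π : GaussianInt) (x : GaussianInt ⧸ Ideal.span {π}) : ℕ :=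
  sInf {m | ∃ a b : ℤ, Ideal.Quotient.mk (Ideal.span {π}) ⟨a, b⟩ = x ∧
    m = a.natAbs + b.natAbs}

/-- The Mannheim weight of a vector over `G_π` is the sum of the Mannheim
weights of its components. -/
noncomputable def mWtVec (π : GaussianInt) {n : ℕ}
    (v : Fin n → GaussianInt ⧸ Ideal.span {π}) : ℕ :=
  ∑ i, mWt π (v i)

/-- A code `C ⊆ G_π^n` corrects all errors of Mannheim weight `t` or less:
any two distinct vectors of Mannheim weight at most `t` lie in distinct cosets of `C`. -/
def CorrectsM (π : GaussianInt) {n : ℕ}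
    (C : AddSubgroup (Fin n → GaussianInt ⧸ Ideal.span {π})) (t : ℕ) : Prop :=
  ∀ u v : Fin n → GaussianInt ⧸ Ideal.span {π},
    mWtVec π u ≤ t → mWtVec π v ≤ t → u - v ∈ C → u = v

/-!
Sending `i` to `-2` identifies `ℤ[i]/(2 + i)` with `ZMod 5`, whose classes are represented by
`0, ±1, ±i`. All nonzero classes therefore have Mannheim weight one, and the Mannheim weight on
`G_{2+i}^n` is the Hamming weight. If `C` corrects weight `t`, the ball of radius `t` injects into
the quotient by `C`; this Hamming ball has `∑ j ≤ t, n.choose j * 4 ^ j` elements.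
-/

open Finset

section HammingBall

variable {ι α : Type*} [Fintype ι] [DecidableEq ι] [Fintype α] [DecidableEq α] [Zero α]

lemma card_filter_support_eq (s : Finset ι) :
    #{v : ι → α | ({i | v i ≠ 0} : Finset ι) = s} = (Fintype.card α - 1) ^ #s := by
  have hpi : ({v : ι → α | ({i | v i ≠ 0} : Finset ι) = s} : Finset (ι → α)) =
      Fintype.piFinset fun i ↦ if i ∈ s then {0}ᶜ else {0} := by
    ext v
    simp only [mem_filter_univ, Fintype.mem_piFinset, Finset.ext_iff]
    refine forall_congr' fun i ↦ ?_
    by_cases hi : i ∈ s <;> simp [hi]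
  simp [hpi, Fintype.card_piFinset, apply_ite, card_compl]

lemma card_filter_hammingNorm_eq (j : ℕ) :
    #{v : ι → α | hammingNorm v = j} =
      (Fintype.card ι).choose j * (Fintype.card α - 1) ^ j := by
  have hmaps : ∀ v ∈ ({v : ι → α | hammingNorm v = j} : Finset (ι → α)),
      ({i | v i ≠ 0} : Finset ι) ∈ powersetCard j univ := by
    simp [hammingNorm, mem_powersetCard]
  have hfiber : ∀ s ∈ powersetCard j (univ : Finset ι),
      #{v ∈ ({v : ι → α | hammingNorm v = j} : Finset (ι → α)) |
        ({i | v i ≠ 0} : Finset ι) = s} = (Fintype.card α - 1) ^ j := by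
    intro s hs
    obtain rfl := (mem_powersetCard.mp hs).2
    rw [filter_filter, ← card_filter_support_eq]
    congr 1 with v
    simp only [mem_filter_univ, and_iff_right_iff_imp]
    rintro rfl
    rfl
  rw [card_eq_sum_card_fiberwise hmaps, sum_congr rfl hfiber]
  simp

lemma card_filter_hammingNorm_le (t : ℕ) :
    #{v : ι → α | hammingNorm v ≤ t} =
      ∑ j ∈ range (t + 1), (Fintype.card ι).choose j * (Fintype.card α - 1) ^ j := by
  have hmaps : ∀ v ∈ ({v : ι → α | hammingNorm v ≤ t} : Finset (ι → α)),
      hammingNorm v ∈ range (t + 1) := by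
    simp
  rw [card_eq_sum_card_fiberwise hmaps]
  refine sum_congr rfl fun j hj ↦ ?_
  rw [filter_filter, ← card_filter_hammingNorm_eq]
  congr 1 with v
  simp only [mem_filter_univ, and_iff_right_iff_imp]
  rintro rfl
  exact Nat.lt_succ_iff.mp (mem_range.mp hj)

end HammingBall

section QuadraticQuotient

variable (d r : ℤ)

/-- Evaluation of `ℤ[√d]` at `√d = -r`. The modulus `r ^ 2 - d` is the norm of `r + √d`. -/
def sqrtdEval : ℤ√d →+* ZMod (r ^ 2 - d).natAbs :=
  Zsqrtd.lift ⟨-r, by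
    have h : ((r ^ 2 - d : ℤ) : ZMod (r ^ 2 - d).natAbs) = 0 :=
      (ZMod.intCast_zmod_eq_zero_iff_dvd _ _).mpr Int.natAbs_dvd_self
    push_cast at h
    linear_combination h⟩

lemma sqrtdEval_apply (z : ℤ√d) : sqrtdEval d r z = ((z.re - z.im * r : ℤ) : ZMod _) := by
  simp [sqrtdEval, sub_eq_add_neg]

lemma ker_sqrtdEval : RingHom.ker (sqrtdEval d r) = Ideal.span {(⟨r, 1⟩ : ℤ√d)} := by
  ext z
  rw [RingHom.mem_ker, Ideal.mem_span_singleton, sqrtdEval_apply,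
    ZMod.intCast_zmod_eq_zero_iff_dvd, Int.natAbs_dvd]
  constructor
  · rintro ⟨c, hc⟩
    refine ⟨⟨z.im + r * c, -c⟩, Zsqrtd.ext ?_ ?_⟩ <;> simp only [Zsqrtd.re_mul, Zsqrtd.im_mul]
    · linear_combination hc
    · ring
  · rintro ⟨w, rfl⟩
    refine ⟨-w.im, ?_⟩
    simp only [Zsqrtd.re_mul, Zsqrtd.im_mul]
    ring

/-- The isomorphism `ℤ[√d]/(r + √d) ≃ ℤ/(r ^ 2 - d)` induced by `sqrtdEval`. -/
noncomputable def quotientSpanAddSqrtdEquiv :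
    ℤ√d ⧸ Ideal.span {(⟨r, 1⟩ : ℤ√d)} ≃+* ZMod (r ^ 2 - d).natAbs :=
  (Ideal.quotEquivOfEq (ker_sqrtdEval d r).symm).trans
    (RingHom.quotientKerEquivOfSurjective (ZMod.ringHom_surjective _))

lemma quotientSpanAddSqrtdEquiv_mk (z : ℤ√d) :
    quotientSpanAddSqrtdEquiv d r (Ideal.Quotient.mk _ z) = sqrtdEval d r z :=
  rfl

lemma natCard_quotient_span_add_sqrtd :
    Nat.card (ℤ√d ⧸ Ideal.span {(⟨r, 1⟩ : ℤ√d)}) = (r ^ 2 - d).natAbs := by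
  rw [Nat.card_congr (quotientSpanAddSqrtdEquiv d r).toEquiv, Nat.card_zmod]

end QuadraticQuotient

section MannheimWeight

variable {π : GaussianInt}

lemma mWt_mk_le (z : GaussianInt) :
    mWt π (Ideal.Quotient.mk _ z) ≤ z.re.natAbs + z.im.natAbs :=
  Nat.sInf_le ⟨z.re, z.im, rfl, rfl⟩

lemma mWt_eq_zero_iff {x : GaussianInt ⧸ Ideal.span {π}} : mWt π x = 0 ↔ x = 0 := by
  constructor
  · intro h
    obtain ⟨z, rfl⟩ := Ideal.Quotient.mk_surjective x
    rcases Nat.sInf_eq_zero.mp h with ⟨a, b, hmk, hab⟩ | hempty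
    · obtain ⟨rfl, rfl⟩ : a = 0 ∧ b = 0 := by omega
      exact hmk.symm.trans (map_zero _)
    · exact (Set.eq_empty_iff_forall_notMem.mp hempty _ ⟨z.re, z.im, rfl, rfl⟩).elim
  · rintro rfl
    simpa using mWt_mk_le (π := π) 0

lemma mWt_two_add_I_le_one (x : GaussianInt ⧸ Ideal.span {(⟨2, 1⟩ : GaussianInt)}) :
    mWt ⟨2, 1⟩ x ≤ 1 := by
  have hrep : ∀ y : ZMod 5, ∃ z ∈ ({0, 1, -1, ⟨0, 1⟩, ⟨0, -1⟩} : Finset GaussianInt),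
      z.re.natAbs + z.im.natAbs ≤ 1 ∧ ((z.re - z.im * 2 : ℤ) : ZMod 5) = y := by
    decide
  obtain ⟨z, -, hz, hzx⟩ := hrep (quotientSpanAddSqrtdEquiv (-1) 2 x)
  have hmk : Ideal.Quotient.mk _ z = x := by
    apply (quotientSpanAddSqrtdEquiv (-1) 2).injective
    rw [quotientSpanAddSqrtdEquiv_mk, sqrtdEval_apply]
    exact hzx
  exact hmk ▸ (mWt_mk_le z).trans hz

open Classical in
lemma mWtVec_two_add_I_eq_hammingNorm {n : ℕ}
    (v : Fin n → GaussianInt ⧸ Ideal.span {(⟨2, 1⟩ : GaussianInt)}) :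
    mWtVec ⟨2, 1⟩ v = hammingNorm v := by
  rw [mWtVec, hammingNorm, card_filter]
  refine sum_congr rfl fun i _ ↦ ?_
  split_ifs with h
  · exact (mWt_two_add_I_le_one _).antisymm (Nat.one_le_iff_ne_zero.mpr (mWt_eq_zero_iff.not.mpr h))
  · exact mWt_eq_zero_iff.mpr (not_not.mp h)

lemma natCard_mWtVec_two_add_I_le (n t : ℕ) :
    Nat.card {v : Fin n → GaussianInt ⧸ Ideal.span {(⟨2, 1⟩ : GaussianInt)} //
      mWtVec ⟨2, 1⟩ v ≤ t} = ∑ j ∈ range (t + 1), n.choose j * 4 ^ j := by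
  classical
  have hcard : Nat.card (GaussianInt ⧸ Ideal.span {(⟨2, 1⟩ : GaussianInt)}) = 5 :=
    natCard_quotient_span_add_sqrtd (-1) 2
  have : Finite (GaussianInt ⧸ Ideal.span {(⟨2, 1⟩ : GaussianInt)}) :=
    Nat.finite_of_card_ne_zero (by simp [hcard])
  have := Fintype.ofFinite (GaussianInt ⧸ Ideal.span {(⟨2, 1⟩ : GaussianInt)})
  rw [Nat.card_eq_fintype_card] at hcard
  simp only [mWtVec_two_add_I_eq_hammingNorm]
  rw [Nat.card_eq_fintype_card, Fintype.card_subtype, card_filter_hammingNorm_le, hcard,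
    Fintype.card_fin]

lemma CorrectsM.natCard_le_index {n t : ℕ}
    {C : AddSubgroup (Fin n → GaussianInt ⧸ Ideal.span {π})} [C.FiniteIndex]
    (hC : CorrectsM π C t) :
    Nat.card {v : Fin n → GaussianInt ⧸ Ideal.span {π} // mWtVec π v ≤ t} ≤ C.index := by
  refine Nat.card_le_card_of_injective
    (fun v ↦ (v.1 : (Fin n → GaussianInt ⧸ Ideal.span {π}) ⧸ C)) fun u v huv ↦ ?_
  refine Subtype.ext (hC u v u.2 v.2 ?_)
  rw [sub_eq_neg_add]
  exact QuotientAddGroup.eq.mp huv.symm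

end MannheimWeight

lemma addSubgroup_index_eq_pow_sub {G : Type*} [AddGroup G] {p n k : ℕ} (hp : 1 < p)
    (hG : Nat.card G = p ^ n) {H : AddSubgroup G} (hH : Nat.card H = p ^ k) :
    H.index = p ^ (n - k) := by
  have hkn : k ≤ n := (Nat.pow_dvd_pow_iff_le_right hp).mp (hG ▸ hH ▸ H.card_addSubgroup_dvd_card)
  refine Nat.eq_of_mul_eq_mul_left (Nat.pow_pos (n := k) (Nat.zero_lt_of_lt hp)) ?_
  rw [← pow_add, Nat.add_sub_cancel' hkn, ← hG, ← hH, H.card_mul_index]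

lemma sum_range_three_choose_mul_four_pow (n : ℕ) :
    ∑ j ∈ range 3, n.choose j * 4 ^ j = 8 * n ^ 2 - 4 * n + 1 := by
  have hchoose : n.choose 2 * 2 + n = n ^ 2 := by
    induction n with
    | zero => rfl
    | succ m ih => rw [Nat.choose_succ_succ' m 1, Nat.choose_one_right]; linarith
  simp only [sum_range_succ, sum_range_zero, Nat.choose_zero_right, Nat.choose_one_right]
  omega

theorem sphere_packing_mannheim_wt_two_2i_general {n k t : ℕ}
    (C : AddSubgroup (Fin n → GaussianInt ⧸ Ideal.span {(⟨2, 1⟩ : GaussianInt)}))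
    (hcard : Nat.card C = 5 ^ k) (hcorr : CorrectsM ⟨2, 1⟩ C t) :
    ∑ j ∈ range (t + 1), n.choose j * 4 ^ j ≤ 5 ^ (n - k) := by
  have hambient : Nat.card (Fin n → GaussianInt ⧸ Ideal.span {(⟨2, 1⟩ : GaussianInt)}) = 5 ^ n := by
    rw [Nat.card_fun, Nat.card_fin]
    exact congrArg (· ^ n) (natCard_quotient_span_add_sqrtd (-1) 2)
  have hindex : C.index = 5 ^ (n - k) := addSubgroup_index_eq_pow_sub (by norm_num) hambient hcard
  have : C.FiniteIndex := ⟨by simp [hindex]⟩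
  calc ∑ j ∈ range (t + 1), n.choose j * 4 ^ j
      = Nat.card {v // mWtVec ⟨2, 1⟩ v ≤ t} := (natCard_mWtVec_two_add_I_le n t).symm
    _ ≤ C.index := hcorr.natCard_le_index
    _ = 5 ^ (n - k) := hindex

/-- An `(n, k)` linear code over `G_{2+i}` (so `p = 5`) correcting all errors of
Mannheim weight 2 or less satisfies `5^(n-k) ≥ 8n² − 4n + 1`. -/
theorem sphere_packing_mannheim_wt_two_2i
    (n k : ℕ) (hn : 1 ≤ n) (hk : 1 ≤ k) (hkn : k ≤ n)
    (C : AddSubgroup (Fin n → GaussianInt ⧸ Ideal.span {(⟨2, 1⟩ : GaussianInt)}))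
    (hcard : Nat.card C = 5 ^ k)
    (hcorr : CorrectsM (⟨2, 1⟩ : GaussianInt) C 2) :
    8 * n ^ 2 - 4 * n + 1 ≤ 5 ^ (n - k) :=
  sum_range_three_choose_mul_four_pow n ▸ sphere_packing_mannheim_wt_two_2i_general C hcard hcorr
end

section
/- Let π be a Gaussian prime with π·π̄ = p, where p ≡ 1 (mod 4) is a rational prime with p ≥ 13, and let n ≥ 1 and 1 ≤ k ≤ n. If C is an additive subgroup of G_π^n of cardinality p^k (an (n,k) linear code) that corrects all errors of Mannheim weight 2 or less, then p^{n−k} ≥ 8n² + 1. -/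
/-!
Cosets of a code correcting two errors separate the vectors of weight at most `2`, so the index of
the code is at least the number of such vectors. If `π` has norm at least `13` and is not an
associate of `4`, its nonzero multiples have `ℓ¹` norm at least `5`, so reduction modulo `π` is
injective and weight-preserving on the `ℓ¹` ball of radius `2`: the alphabet has `1`, `4`, `8`
classes of weight `0`, `1`, `2`. Weights add over coordinates, so vectors of length `n` are counted
by `(1 + 4X + 8X² + ⋯)ⁿ`, whose first three coefficients `1`, `4n`, `8n²` sum to `8n² + 4n + 1`.
-/

open Polynomial Finset

section WeightEnumerator

variable {A : Type*} [Fintype A]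

/-- The weight enumerator `∑ a, X ^ w a`, the generating function counting the elements of a finite
type by weight. -/
noncomputable def weightEnumerator (w : A → ℕ) : ℕ[X] :=
  ∑ a, X ^ w a

lemma coeff_weightEnumerator (w : A → ℕ) (s : ℕ) :
    (weightEnumerator w).coeff s = Set.ncard {a | w a = s} := by
  simp [weightEnumerator, coeff_X_pow, eq_comm (a := s), Set.ncard_eq_toFinset_card']

lemma sum_coeff_weightEnumerator (w : A → ℕ) (t : ℕ) :
    ∑ s ∈ range (t + 1), (weightEnumerator w).coeff s = Set.ncard {a | w a ≤ t} := by
  simp only [weightEnumerator, finsetSum_coeff, coeff_X_pow]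
  rw [sum_comm]
  simp [Set.ncard_eq_toFinset_card']

lemma weightEnumerator_pow (w : A → ℕ) (n : ℕ) :
    weightEnumerator w ^ n = weightEnumerator fun v : Fin n → A ↦ ∑ i, w (v i) := by
  simp only [weightEnumerator, Fintype.sum_pow, prod_pow_eq_pow_sum]

end WeightEnumerator

section PolynomialPow

variable {R : Type*} [CommSemiring R] {P : R[X]}

lemma coeff_zero_pow_of_coeff_zero_eq_one (hP : P.coeff 0 = 1) (n : ℕ) : (P ^ n).coeff 0 = 1 := by
  rw [coeff_zero_eq_eval_zero, eval_pow, ← coeff_zero_eq_eval_zero, hP, one_pow]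

lemma coeff_one_pow_of_coeff_zero_eq_one (hP : P.coeff 0 = 1) (n : ℕ) :
    (P ^ n).coeff 1 = n * P.coeff 1 := by
  induction n with
  | zero => simp [coeff_one]
  | succ n ih =>
    rw [pow_succ, mul_coeff_one, ih, hP, coeff_zero_pow_of_coeff_zero_eq_one hP]
    push_cast
    ring

lemma coeff_two_pow_of_coeff_zero_eq_one (hP : P.coeff 0 = 1) (n : ℕ) :
    (P ^ n).coeff 2 = n * P.coeff 2 + n.choose 2 * P.coeff 1 ^ 2 := by
  induction n with
  | zero => simp [coeff_one]
  | succ n ih =>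
    have hsplit : (P ^ (n + 1)).coeff 2 = (P ^ n).coeff 0 * P.coeff 2 +
        (P ^ n).coeff 1 * P.coeff 1 + (P ^ n).coeff 2 * P.coeff 0 := by
      simp [pow_succ, coeff_mul, Nat.sum_antidiagonal_eq_sum_range_succ_mk, sum_range_succ]
    rw [hsplit, ih, hP, coeff_zero_pow_of_coeff_zero_eq_one hP,
      coeff_one_pow_of_coeff_zero_eq_one hP, Nat.choose_succ_succ' n 1, Nat.choose_one_right]
    push_cast
    ring

end PolynomialPow

section L1Norm

/-- The `ℓ¹` norm `|a| + |b|` of a Gaussian integer `a + bi`, which the Mannheim weight minimizes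
over a residue class. -/
def l1Norm (z : GaussianInt) : ℕ :=
  z.re.natAbs + z.im.natAbs

lemma l1Norm_sub_le (z w : GaussianInt) : l1Norm (z - w) ≤ l1Norm z + l1Norm w := by
  simp only [l1Norm, Zsqrtd.re_sub, Zsqrtd.im_sub]
  omega

lemma l1Norm_eq_zero {z : GaussianInt} : l1Norm z = 0 ↔ z = 0 := by
  simp [l1Norm, Zsqrtd.ext_iff]

lemma ncard_l1Norm_eq_zero : Set.ncard {z | l1Norm z = 0} = 1 := by
  simp [l1Norm_eq_zero]

lemma ncard_l1Norm_eq {s : ℕ} (hs : s ≠ 0) : Set.ncard {z | l1Norm z = s} = 4 * s := by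
  -- `walk` goes once round the square of radius `s`, from `-s` through `-is`, `s` and `is`.
  let walk (k : ℤ) : GaussianInt := ⟨s - k.natAbs, max (min k (2 * s - k)) (-2 * s - k)⟩
  have injOn_walk : Set.InjOn walk (Ico (-2 * s : ℤ) (2 * s)) := by
    intro k hk m hm hkm
    simp only [coe_Ico, Set.mem_Ico] at hk hm
    simp only [walk, Zsqrtd.ext_iff] at hkm
    omega
  have image_walk : walk '' Ico (-2 * s : ℤ) (2 * s) = {z | l1Norm z = s} := by
    ext ⟨a, b⟩
    simp only [walk, Set.mem_image, coe_Ico, Set.mem_Ico, Zsqrtd.ext_iff, Set.mem_ofPred_eq, l1Norm]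
    constructor
    · rintro ⟨k, hk, ha, hb⟩
      omega
    · intro hab
      rcases lt_or_ge 0 b with hb | hb
      · exact ⟨s - a, by omega⟩
      · exact ⟨a - s, by omega⟩
  rw [← image_walk, injOn_walk.ncard_image, Set.ncard_coe_finset, Int.card_Ico]
  omega

lemma norm_le_ten_or_eq_sixteen {z : GaussianInt} (hz : l1Norm z ≤ 4) :
    z.norm ≤ 10 ∨ z.norm = 16 := by
  obtain ⟨a, b⟩ := z
  simp only [l1Norm] at hz
  simp only [Zsqrtd.norm_def]
  rw [← Int.natAbs_mul_self' a, mul_assoc, ← Int.natAbs_mul_self' b]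
  generalize a.natAbs = x at *
  generalize b.natAbs = y at *
  have : x ≤ 4 := by omega
  have : y ≤ 4 := by omega
  interval_cases x <;> interval_cases y <;> simp_all

lemma eq_zero_of_dvd_of_l1Norm_le_four {π z : GaussianInt} (h13 : 13 ≤ π.norm)
    (h16 : π.norm ≠ 16) (hdvd : π ∣ z) (hz : l1Norm z ≤ 4) : z = 0 := by
  obtain ⟨w, rfl⟩ := hdvd
  by_contra hne
  have hpos : 0 < π.norm * w.norm := by
    rw [← Zsqrtd.norm_mul]
    exact GaussianInt.norm_pos.2 hne
  have hw : 0 < w.norm := pos_of_mul_pos_right hpos (by omega)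
  have hsmall := norm_le_ten_or_eq_sixteen hz
  rw [Zsqrtd.norm_mul] at hsmall
  obtain hw1 | hw2 : w.norm = 1 ∨ 2 ≤ w.norm := by omega
  · rw [hw1] at hsmall
    omega
  · have : 26 ≤ π.norm * w.norm := by nlinarith
    omega

end L1Norm

section ResidueRing

/-- The basis `1, i` of the Gaussian integers over `ℤ`, given through its coordinate functions. -/
noncomputable def basisOneI : Module.Basis (Fin 2) ℤ GaussianInt :=
  .ofEquivFun
    { toFun := fun w ↦ ![w.re, w.im]
      invFun := fun v ↦ ⟨v 0, v 1⟩
      map_add' := fun _ _ ↦ by simp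
      map_smul' := fun _ _ ↦ by simp
      left_inv := fun _ ↦ rfl
      right_inv := fun v ↦ by ext i; fin_cases i <;> rfl }

lemma basisOneI_repr (z : GaussianInt) : ⇑(basisOneI.repr z) = ![z.re, z.im] := rfl

lemma coe_basisOneI : ⇑basisOneI = ![1, ⟨0, 1⟩] := by
  ext1 j
  rw [Module.Basis.apply_eq_iff]
  ext i
  fin_cases i <;> fin_cases j <;> simp [basisOneI_repr]

lemma leftMulMatrix_basisOneI (z : GaussianInt) :
    Algebra.leftMulMatrix basisOneI z = !![z.re, -z.im; z.im, z.re] := by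
  ext i j
  rw [Algebra.leftMulMatrix_eq_repr_mul, basisOneI_repr, coe_basisOneI]
  fin_cases i <;> fin_cases j <;> simp

lemma algebraNorm_eq_norm (z : GaussianInt) : Algebra.norm ℤ z = z.norm := by
  rw [Algebra.norm_eq_matrix_det basisOneI, leftMulMatrix_basisOneI, Matrix.det_fin_two_of,
    Zsqrtd.norm_def]
  ring

lemma card_quotient_span_singleton (z : GaussianInt) :
    Nat.card (GaussianInt ⧸ Ideal.span {z}) = z.norm.natAbs := by
  have : Module.Free ℤ GaussianInt := .of_basis basisOneI
  have : Module.Finite ℤ GaussianInt := .of_basis basisOneI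
  rw [← algebraNorm_eq_norm]
  exact Ideal.absNorm_span_singleton z

lemma finite_quotient_span_singleton {z : GaussianInt} (hz : z ≠ 0) :
    Finite (GaussianInt ⧸ Ideal.span {z}) := by
  apply Nat.finite_of_card_ne_zero
  rw [card_quotient_span_singleton, Int.natAbs_ne_zero]
  exact (GaussianInt.norm_pos.2 hz).ne'

end ResidueRing

section MannheimWeight

variable {π : GaussianInt} {t : ℕ}

lemma mWt_mk_le_l1Norm (π z : GaussianInt) : mWt π (Ideal.Quotient.mk _ z) ≤ l1Norm z :=
  Nat.sInf_le ⟨z.re, z.im, rfl, rfl⟩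

lemma exists_mk_eq_and_l1Norm_eq_mWt (x : GaussianInt ⧸ Ideal.span {π}) :
    ∃ z, Ideal.Quotient.mk _ z = x ∧ l1Norm z = mWt π x := by
  obtain ⟨z, hz⟩ := Ideal.Quotient.mk_surjective x
  obtain ⟨a, b, hab, hwt⟩ := Nat.sInf_mem
    (s := {m | ∃ a b : ℤ, Ideal.Quotient.mk (Ideal.span {π}) ⟨a, b⟩ = x ∧
      m = a.natAbs + b.natAbs}) ⟨l1Norm z, z.re, z.im, hz, rfl⟩
  exact ⟨⟨a, b⟩, hab, hwt.symm⟩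

lemma injOn_mk_l1Norm_le (hπ : ∀ z, π ∣ z → l1Norm z ≤ 2 * t → z = 0) :
    Set.InjOn (Ideal.Quotient.mk (Ideal.span {π})) {z | l1Norm z ≤ t} := by
  intro z hz w hw hzw
  rw [Ideal.Quotient.eq, Ideal.mem_span_singleton] at hzw
  have hsmall : l1Norm (z - w) ≤ 2 * t :=
    (l1Norm_sub_le z w).trans ((add_le_add hz hw).trans_eq (two_mul t).symm)
  exact sub_eq_zero.1 (hπ _ hzw hsmall)

lemma mWt_mk_eq_l1Norm (hπ : ∀ z, π ∣ z → l1Norm z ≤ 2 * t → z = 0)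
    {z : GaussianInt} (hz : l1Norm z ≤ t) :
    mWt π (Ideal.Quotient.mk _ z) = l1Norm z := by
  obtain ⟨w, hmk, hw⟩ := exists_mk_eq_and_l1Norm_eq_mWt (Ideal.Quotient.mk (Ideal.span {π}) z)
  have hwt : l1Norm w ≤ t := hw.trans_le ((mWt_mk_le_l1Norm π z).trans hz)
  rw [← hw, injOn_mk_l1Norm_le hπ hwt hz hmk]

lemma ncard_mWt_eq (hπ : ∀ z, π ∣ z → l1Norm z ≤ 2 * t → z = 0)
    {s : ℕ} (hst : s ≤ t) :
    Set.ncard {x | mWt π x = s} = Set.ncard {z | l1Norm z = s} := by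
  have himage : {x | mWt π x = s} = Ideal.Quotient.mk _ '' {z | l1Norm z = s} := by
    ext x
    constructor
    · rintro rfl
      obtain ⟨z, hzx, hz⟩ := exists_mk_eq_and_l1Norm_eq_mWt x
      exact ⟨z, hz, hzx⟩
    · rintro ⟨z, rfl, rfl⟩
      exact mWt_mk_eq_l1Norm hπ hst
  rw [himage]
  exact ((injOn_mk_l1Norm_le hπ).mono fun z hz ↦ hz.trans_le hst).ncard_image

end MannheimWeight

section SpherePacking

variable {π : GaussianInt} {n : ℕ}

lemma ncard_mWtVec_le_two (h13 : 13 ≤ π.norm) (h16 : π.norm ≠ 16) :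
    Set.ncard {v : Fin n → GaussianInt ⧸ Ideal.span {π} | mWtVec π v ≤ 2} =
      8 * n ^ 2 + 4 * n + 1 := by
  have := finite_quotient_span_singleton (GaussianInt.norm_pos.1 (by omega : 0 < π.norm))
  have := Fintype.ofFinite (GaussianInt ⧸ Ideal.span {π})
  have hmin : ∀ z, π ∣ z → l1Norm z ≤ 2 * 2 → z = 0 := fun _ ↦
    eq_zero_of_dvd_of_l1Norm_le_four h13 h16
  have hcoeff {s : ℕ} (hs : s ≤ 2) :
      (weightEnumerator (mWt π)).coeff s = Set.ncard {z | l1Norm z = s} :=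
    (coeff_weightEnumerator _ s).trans (ncard_mWt_eq hmin hs)
  have h0 : (weightEnumerator (mWt π)).coeff 0 = 1 := by
    rw [hcoeff zero_le_two, ncard_l1Norm_eq_zero]
  have h1 : (weightEnumerator (mWt π)).coeff 1 = 4 := by
    rw [hcoeff one_le_two, ncard_l1Norm_eq one_ne_zero, mul_one]
  have h2 : (weightEnumerator (mWt π)).coeff 2 = 8 := by
    rw [hcoeff le_rfl, ncard_l1Norm_eq two_ne_zero]
  have hchoose : n.choose 2 * 2 + n = n ^ 2 := by
    rw [Nat.choose_two_right, Nat.div_mul_cancel (Nat.even_mul_pred_self n).two_dvd,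
      Nat.mul_sub_one, Nat.sub_add_cancel (Nat.le_mul_self n), sq]
  calc
    Set.ncard {v : Fin n → GaussianInt ⧸ Ideal.span {π} | mWtVec π v ≤ 2}
      = ∑ s ∈ range 3, (weightEnumerator (mWt π) ^ n).coeff s := by
        rw [weightEnumerator_pow]
        exact (sum_coeff_weightEnumerator _ 2).symm
    _ = 1 + n * 4 + (n * 8 + n.choose 2 * 4 ^ 2) := by
        simp only [sum_range_succ, range_zero, sum_empty, zero_add,
          coeff_zero_pow_of_coeff_zero_eq_one h0, coeff_one_pow_of_coeff_zero_eq_one h0,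
          coeff_two_pow_of_coeff_zero_eq_one h0, h1, h2, Nat.cast_id]
    _ = 8 * n ^ 2 + 4 * n + 1 := by
        rw [← hchoose]
        ring

variable {C : AddSubgroup (Fin n → GaussianInt ⧸ Ideal.span {π})}

lemma CorrectsM.ncard_mWtVec_le_le_index {t : ℕ} (hC : CorrectsM π C t) [C.FiniteIndex] :
    Set.ncard {v : Fin n → GaussianInt ⧸ Ideal.span {π} | mWtVec π v ≤ t} ≤ C.index := by
  refine Nat.card_le_card_of_injective
    (fun v : {v | mWtVec π v ≤ t} ↦ QuotientAddGroup.mk (s := C) v.1) ?_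
  intro u v huv
  have hmem : v.1 - u.1 ∈ C := by
    rw [← neg_add_eq_sub]
    exact QuotientAddGroup.eq.1 huv
  exact Subtype.ext (hC v u v.2 u.2 hmem).symm

lemma index_eq_norm_pow_sub {p k : ℕ} (hp : 0 < p) (hnorm : π.norm = p) (hkn : k ≤ n)
    (hcard : Nat.card C = p ^ k) : C.index = p ^ (n - k) := by
  apply Nat.eq_of_mul_eq_mul_right (pow_pos hp k)
  calc
    C.index * p ^ k = Nat.card (Fin n → GaussianInt ⧸ Ideal.span {π}) := by
      rw [← hcard, C.index_mul_card]
    _ = p ^ n := by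
      rw [Nat.card_fun, Nat.card_fin, card_quotient_span_singleton, hnorm, Int.natAbs_natCast]
    _ = p ^ (n - k) * p ^ k := (pow_sub_mul_pow p hkn).symm

theorem sphere_packing_mannheim_wt_two_general (h13 : 13 ≤ π.norm) (h16 : π.norm ≠ 16)
    (hcorr : CorrectsM π C 2) : 8 * n ^ 2 + 4 * n + 1 ≤ C.index := by
  have := finite_quotient_span_singleton (GaussianInt.norm_pos.1 (by omega : 0 < π.norm))
  rw [← ncard_mWtVec_le_two h13 h16]
  exact hcorr.ncard_mWtVec_le_le_index

end SpherePacking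

/-- An `(n, k)` linear code over `G_π` (`π` a Gaussian prime with `π·π̄ = p`,
`p ≡ 1 (mod 4)` a rational prime with `p ≥ 13`) correcting all errors of
Mannheim weight 2 or less satisfies `p^(n-k) ≥ 8n² + 1`. -/
theorem sphere_packing_mannheim_wt_two (π : GaussianInt) (hπ : Prime π)
    (p : ℕ) (hp : p.Prime) (hp4 : p % 4 = 1) (hp13 : 13 ≤ p)
    (hnorm : Zsqrtd.norm π = (p : ℤ))
    (n k : ℕ) (hn : 1 ≤ n) (hk : 1 ≤ k) (hkn : k ≤ n)
    (C : AddSubgroup (Fin n → GaussianInt ⧸ Ideal.span {π}))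
    (hcard : Nat.card C = p ^ k)
    (hcorr : CorrectsM π C 2) :
    8 * n ^ 2 + 1 ≤ p ^ (n - k) := by
  have hindex := index_eq_norm_pow_sub hp.pos hnorm hkn hcard
  have hpacking := sphere_packing_mannheim_wt_two_general (by omega) (by omega) hcorr
  omega
end
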